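/- Let G be a unicyclic graph of order n whose unique cycle C has odd length k, and let F = G − V(C). For t > 0 define M_G(t) = i^{−n}μ_G(it) and M_F(t) = i^{−(n−k)}μ_F(it). Then i^{−n}·φ_G(i·t) = M_G(t) + 2i·M_F(t) if k ≡ 1 (mod 4), and i^{−n}·φ_G(i·t) = M_G(t) − 2i·M_F(t) if k ≡ 3 (mod 4). In both cases i^{−n}·φ_G(i·t) has positive real part for every t > 0. -/

import Mathlib

variable {V : Type*}

/-- Number of matchings of size `j` in `H` (sets of `j` pairwise vertex-disjoint edges). -/
noncomputable def mcount (H : SimpleGraph V) (j : ℕ) : ℕ :=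
  Set.ncard {M : Finset (Sym2 V) | (∀ e ∈ M, e ∈ H.edgeSet) ∧ M.card = j ∧
    ∀ e ∈ M, ∀ f ∈ M, e ≠ f → ∀ v : V, ¬(v ∈ e ∧ v ∈ f)}

/-- The matching polynomial of `H`, as a function on `ℂ`. -/
noncomputable def matchPolyFun [Fintype V] (H : SimpleGraph V) (x : ℂ) : ℂ :=
  ∑ j ∈ Finset.range (Fintype.card V / 2 + 1),
    (-1 : ℂ) ^ j * (mcount H j : ℂ) * x ^ (Fintype.card V - 2 * j)

/-- The characteristic polynomial `det (x • 1 - A(G))` of the adjacency matrix, as a function. -/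
noncomputable def charFun [Fintype V] [DecidableEq V] (G : SimpleGraph V)
    [DecidableRel G.Adj] (x : ℂ) : ℂ :=
  (x • (1 : Matrix V V ℂ) - G.adjMatrix ℂ).det

/-- The adjacency matrix of a graph is Hermitian (symmetric). -/
theorem adjHerm [Fintype V] [DecidableEq V] (G : SimpleGraph V) [DecidableRel G.Adj] :
    (G.adjMatrix ℝ).IsHermitian := by
  rw [Matrix.IsHermitian, Matrix.conjTranspose_eq_transpose_of_trivial]
  exact SimpleGraph.isSymm_adjMatrix G

/-- Positive square energy. -/
noncomputable def sPlus [Fintype V] [DecidableEq V] (G : SimpleGraph V) [DecidableRel G.Adj] : ℝ :=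
  ∑ i, if 0 < (adjHerm G).eigenvalues i then ((adjHerm G).eigenvalues i) ^ 2 else 0

/-- Negative square energy. -/
noncomputable def sMinus [Fintype V] [DecidableEq V] (G : SimpleGraph V) [DecidableRel G.Adj] : ℝ :=
  ∑ i, if (adjHerm G).eigenvalues i < 0 then ((adjHerm G).eigenvalues i) ^ 2 else 0

theorem perm_apply_inv (σ : Equiv.Perm V) (a : V) : σ (σ⁻¹ a) = a := Equiv.apply_symm_apply σ a

theorem perm_inv_apply (σ : Equiv.Perm V) (a : V) : σ⁻¹ (σ a) = a := Equiv.symm_apply_apply σ a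

/-- `σ` moves vertices only along edges. -/
def Compat (G : SimpleGraph V) (σ : Equiv.Perm V) : Prop := ∀ i, σ i ≠ i → G.Adj (σ i) i

/-- In an acyclic graph, a compatible permutation is an involution. -/
theorem acyclic_invol [Finite V] (T : SimpleGraph V) (hT : T.IsAcyclic) (σ : Equiv.Perm V)
    (h : Compat T σ) (i : V) : σ (σ i) = i := by
  classical
  by_contra hne
  have hi : σ i ≠ i := fun e => hne (by rw [e, e])
  have hbr := SimpleGraph.isAcyclic_iff_forall_adj_isBridge.mp hT (h i hi)
  rw [SimpleGraph.isBridge_iff] at hbr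
  have hex : ∃ m : ℕ, (σ ^ m) (σ i) = i := by
    refine ⟨orderOf σ - 1, ?_⟩
    rw [← Equiv.Perm.mul_apply, ← pow_succ, Nat.sub_add_cancel (orderOf_pos σ), pow_orderOf_eq_one]
    rfl
  have key : ∀ m ≤ Nat.find hex, (T.deleteEdges {s(σ i, i)}).Reachable (σ i) ((σ ^ m) (σ i)) := by
    intro m
    induction m with
    | zero => intro _; simp
    | succ m ih =>
      intro hm
      refine (ih (by omega)).trans ?_
      have hmi : (σ ^ m) (σ i) ≠ i := Nat.find_min hex (by omega)
      have hs : (σ ^ (m + 1)) (σ i) = σ ((σ ^ m) (σ i)) := by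
        rw [pow_succ', Equiv.Perm.mul_apply]
      rw [hs]
      set u := (σ ^ m) (σ i) with hu
      by_cases hfix : σ u = u
      · rw [hfix]
      · refine SimpleGraph.Adj.reachable ?_
        rw [SimpleGraph.deleteEdges_adj]
        refine ⟨(h u hfix).symm, ?_⟩
        simp only [Set.mem_singleton_iff, Sym2.eq_iff, not_or, not_and]
        refine ⟨fun e1 e2 => hne (by rw [← e1, e2]), fun e1 _ => hmi e1⟩
  have := key _ le_rfl
  rw [Nat.find_spec hex] at this
  exact hbr this

/-- Data of the unique cycle, recorded as a cyclic permutation `ρ`. -/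
structure CycData [Fintype V] [DecidableEq V] (G : SimpleGraph V) (ρ : Equiv.Perm V) : Prop where
  cyc : ρ.IsCycle
  three : 3 ≤ ρ.support.card
  odd : Odd ρ.support.card
  adj : ∀ a ∈ ρ.support, G.Adj (ρ a) a
  acyc : ∀ a ∈ ρ.support, (G.deleteEdges {s(ρ a, a)}).IsAcyclic

theorem CycData.inv [Fintype V] [DecidableEq V] {G : SimpleGraph V} {ρ : Equiv.Perm V}
    (h : CycData G ρ) : CycData G ρ⁻¹ := by
  have hs : ∀ a ∈ ρ.support, ρ⁻¹ a ∈ ρ.support := by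
    intro a ha
    rw [← Equiv.Perm.support_inv, Equiv.Perm.apply_mem_support, Equiv.Perm.support_inv]
    exact ha
  refine ⟨h.cyc.inv, ?_, ?_, ?_, ?_⟩
  · rw [Equiv.Perm.support_inv]; exact h.three
  · rw [Equiv.Perm.support_inv]; exact h.odd
  · rw [Equiv.Perm.support_inv]
    intro a ha
    have := h.adj _ (hs a ha)
    rw [perm_apply_inv] at this
    exact this.symm
  · rw [Equiv.Perm.support_inv]
    intro a ha
    have := h.acyc _ (hs a ha)
    rw [perm_apply_inv, Sym2.eq_swap] at this
    exact this

theorem CycData.sq_ne [Fintype V] [DecidableEq V] {G : SimpleGraph V} {ρ : Equiv.Perm V}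
    (h : CycData G ρ) {a : V} (ha : a ∈ ρ.support) : ρ (ρ a) ≠ a := by
  intro e
  have h2 : (ρ ^ 2) = 1 := by
    rw [h.cyc.pow_eq_one_iff]
    exact ⟨a, Equiv.Perm.mem_support.mp ha, by rw [pow_two]; exact e⟩
  have := orderOf_dvd_of_pow_eq_one h2
  rw [h.cyc.orderOf] at this
  have := Nat.le_of_dvd (by norm_num) this
  have := h.three
  omega

theorem uses_edge [Finite V] {G : SimpleGraph V} {a b : V}
    (hT : (G.deleteEdges {s(b, a)}).IsAcyclic) {σ : Equiv.Perm V} (hσ : Compat G σ)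
    (hn : ¬ (σ a = b ∨ σ b = a)) : σ * σ = 1 := by
  ext i
  refine acyclic_invol _ hT σ ?_ i
  intro j hj
  rw [SimpleGraph.deleteEdges_adj]
  refine ⟨hσ j hj, ?_⟩
  simp only [Set.mem_singleton_iff, Sym2.eq_iff, not_or, not_and]
  push Not at hn
  exact ⟨fun e1 e2 => hn.1 (e2 ▸ e1), fun e1 e2 => hn.2 (e2 ▸ e1)⟩

theorem noninvol_cases [Fintype V] [DecidableEq V] {G : SimpleGraph V} {ρ : Equiv.Perm V}
    (h : CycData G ρ) {σ : Equiv.Perm V} (hσ : Compat G σ) (hn : σ * σ ≠ 1) :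
    (∀ a ∈ ρ.support, σ a = ρ a) ∨ (∀ a ∈ ρ.support, σ a = ρ⁻¹ a) := by
  have hor : ∀ a ∈ ρ.support, σ a = ρ a ∨ σ (ρ a) = a := by
    intro a ha
    by_contra hc
    exact hn (uses_edge (h.acyc a ha) hσ hc)
  by_cases hex : ∃ a ∈ ρ.support, σ a = ρ a
  · left
    obtain ⟨a, ha, hae⟩ := hex
    have step : ∀ m : ℕ, (ρ ^ m) a ∈ ρ.support ∧ σ ((ρ ^ m) a) = ρ ((ρ ^ m) a) := by
      intro m
      induction m with
      | zero => exact ⟨ha, hae⟩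
      | succ m ih =>
        rw [pow_succ', Equiv.Perm.mul_apply]
        obtain ⟨h1, h2⟩ := ih
        have h3 := Equiv.Perm.apply_mem_support.mpr h1
        refine ⟨h3, ?_⟩
        rcases hor _ h3 with h4 | h4
        · exact h4
        · rw [← h2] at h4
          rw [h2] at h4
          exact absurd (σ.injective (h4.trans h2.symm)) (h.sq_ne h1)
    intro b hb
    obtain ⟨m, hm⟩ := h.cyc.exists_pow_eq (Equiv.Perm.mem_support.mp ha)
      (Equiv.Perm.mem_support.mp hb)
    rw [← hm]
    exact (step m).2
  · right
    push Not at hex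
    intro a ha
    have ha' : ρ⁻¹ a ∈ ρ.support := by
      rw [← Equiv.Perm.support_inv, Equiv.Perm.apply_mem_support, Equiv.Perm.support_inv]
      exact ha
    have := (hor _ ha').resolve_left (hex _ ha')
    rwa [perm_apply_inv] at this

/-- Compatible involutions fixing the cycle pointwise. -/
def FixC [Fintype V] [DecidableEq V] (G : SimpleGraph V) (S : Finset V) (τ : Equiv.Perm V) : Prop :=
  τ * τ = 1 ∧ Compat G τ ∧ ∀ a ∈ S, τ a = a

theorem fixC_notMem [Fintype V] [DecidableEq V] {S : Finset V} {τ : Equiv.Perm V}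
    (h : ∀ a ∈ S, τ a = a) {i : V} (hi : i ∉ S) : τ i ∉ S := by
  intro hc
  have := τ.injective (h _ hc)
  rw [this] at hc
  exact hi hc

theorem fixC_of [Fintype V] [DecidableEq V] {G : SimpleGraph V} {ρ : Equiv.Perm V}
    (h : CycData G ρ) {σ : Equiv.Perm V} (hσ : Compat G σ) (he : ∀ a ∈ ρ.support, σ a = ρ a) :
    FixC G ρ.support (ρ⁻¹ * σ) := by
  have hfix : ∀ a ∈ ρ.support, (ρ⁻¹ * σ) a = a := by
    intro a ha
    rw [Equiv.Perm.mul_apply, he a ha, perm_inv_apply]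
  have hcomp : Compat G (ρ⁻¹ * σ) := by
    intro i hi
    have hiS : i ∉ ρ.support := fun hc => hi (hfix i hc)
    have h1 := fixC_notMem hfix hiS
    have h2 : ρ ((ρ⁻¹ * σ) i) = (ρ⁻¹ * σ) i := Equiv.Perm.notMem_support.mp h1
    have h3 : σ i = (ρ⁻¹ * σ) i := by
      rw [← h2, Equiv.Perm.mul_apply, perm_apply_inv]
    rw [← h3] at hi ⊢
    exact hσ i hi
  refine ⟨?_, hcomp, hfix⟩
  obtain ⟨a, ha⟩ := h.cyc.nonempty_support
  refine uses_edge (h.acyc a ha) hcomp ?_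
  rw [hfix a ha, hfix _ (Equiv.Perm.apply_mem_support.mpr ha)]
  have := Equiv.Perm.mem_support.mp ha
  rintro (e | e)
  · exact this e.symm
  · exact this e

theorem mul_apply_mem [Fintype V] [DecidableEq V] {ρ τ : Equiv.Perm V}
    (hτ : ∀ a ∈ ρ.support, τ a = a) {a : V} (ha : a ∈ ρ.support) : (ρ * τ) a = ρ a := by
  rw [Equiv.Perm.mul_apply, hτ a ha]

theorem mul_apply_notMem [Fintype V] [DecidableEq V] {ρ τ : Equiv.Perm V}
    (hτ : ∀ a ∈ ρ.support, τ a = a) {a : V} (ha : a ∉ ρ.support) : (ρ * τ) a = τ a := by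
  rw [Equiv.Perm.mul_apply, Equiv.Perm.notMem_support.mp (fixC_notMem hτ ha)]

theorem of_fixC [Fintype V] [DecidableEq V] {G : SimpleGraph V} {ρ : Equiv.Perm V}
    (h : CycData G ρ) {τ : Equiv.Perm V} (hτ : FixC G ρ.support τ) :
    Compat G (ρ * τ) ∧ (ρ * τ) * (ρ * τ) ≠ 1 := by
  obtain ⟨h1, h2, h3⟩ := hτ
  constructor
  · intro i hi
    by_cases hiS : i ∈ ρ.support
    · rw [mul_apply_mem h3 hiS]; exact h.adj i hiS
    · rw [mul_apply_notMem h3 hiS] at hi ⊢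
      exact h2 i hi
  · intro e
    obtain ⟨a, ha⟩ := h.cyc.nonempty_support
    have := congrArg (fun f : Equiv.Perm V => f a) e
    simp only [Equiv.Perm.one_apply] at this
    rw [Equiv.Perm.mul_apply, mul_apply_mem h3 ha,
      mul_apply_mem h3 (Equiv.Perm.apply_mem_support.mpr ha)] at this
    exact h.sq_ne ha this

theorem prod_entries [Fintype V] [DecidableEq V] (G : SimpleGraph V) [DecidableRel G.Adj] (x : ℂ)
    (σ : Equiv.Perm V) (hσ : Compat G σ) (T : Finset V) (hT : σ.support ⊆ T) :
    ∏ i ∈ T, (x • (1 : Matrix V V ℂ) - G.adjMatrix ℂ) (σ i) i =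
      (-1) ^ σ.support.card * x ^ (T.card - σ.support.card) := by
  have h1 : ∀ i ∈ T, (x • (1 : Matrix V V ℂ) - G.adjMatrix ℂ) (σ i) i =
      if i ∈ σ.support then (-1) else x := by
    intro i _
    by_cases hi : σ i = i
    · have : i ∉ σ.support := Equiv.Perm.notMem_support.mpr hi
      simp [hi]
    · have : i ∈ σ.support := Equiv.Perm.mem_support.mpr hi
      simp [hi, Matrix.one_apply_ne hi, hσ i hi]
  rw [Finset.prod_congr rfl h1, Finset.prod_ite, Finset.prod_const, Finset.prod_const]
  have h2 : T.filter (fun i => i ∈ σ.support) = σ.support := by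
    rw [Finset.filter_mem_eq_inter, Finset.inter_eq_right]; exact hT
  have h3 : T.filter (fun i => i ∉ σ.support) = T \ σ.support := by
    rw [Finset.sdiff_eq_filter]
  rw [h2, h3, Finset.card_sdiff_of_subset hT]

theorem invol_even [Fintype V] [DecidableEq V] {σ : Equiv.Perm V} (h : σ * σ = 1) :
    2 ∣ σ.support.card := Equiv.Perm.two_dvd_card_support (by rw [pow_two]; exact h)

theorem invol_sign [Fintype V] [DecidableEq V] {σ : Equiv.Perm V} (h : σ * σ = 1) :
    Equiv.Perm.sign σ = (-1) ^ (σ.support.card / 2) := by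
  rw [Equiv.Perm.sign_of_pow_two_eq_one (by rw [pow_two]; exact h)]
  congr 2
  have h1 : Fintype.card (Function.fixedPoints σ) = (σ.supportᶜ).card := by
    rw [Fintype.card_subtype]
    congr 1
    ext i
    simp [Function.mem_fixedPoints, Function.IsFixedPt]
  rw [h1, Finset.card_compl]
  have := Finset.card_le_univ σ.support
  omega

/-- The matching of an involution. -/
def matchOf [Fintype V] [DecidableEq V] (σ : Equiv.Perm V) : Finset (Sym2 V) :=
  σ.support.image (fun i => s(i, σ i))

theorem mem_matchOf [Fintype V] [DecidableEq V] {σ : Equiv.Perm V} (h : σ * σ = 1) (i j : V) :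
    s(i, j) ∈ matchOf σ ↔ σ i = j ∧ i ≠ j := by
  have hh : ∀ a, σ (σ a) = a := fun a => by
    have := congrArg (fun f : Equiv.Perm V => f a) h
    simpa using this
  simp only [matchOf, Finset.mem_image, Equiv.Perm.mem_support, Sym2.eq_iff]
  constructor
  · rintro ⟨a, ha, (⟨rfl, rfl⟩ | ⟨rfl, rfl⟩)⟩
    · exact ⟨rfl, ha.symm⟩
    · exact ⟨hh _, ha⟩
  · rintro ⟨rfl, h2⟩
    exact ⟨i, h2.symm, Or.inl ⟨rfl, rfl⟩⟩

theorem card_matchOf [Fintype V] [DecidableEq V] {σ : Equiv.Perm V} (h : σ * σ = 1) :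
    σ.support.card = 2 * (matchOf σ).card := by
  have hh : ∀ a, σ (σ a) = a := fun a => by
    have := congrArg (fun f : Equiv.Perm V => f a) h
    simpa using this
  have hm : ∀ i ∈ σ.support, s(i, σ i) ∈ matchOf σ := fun i hi => Finset.mem_image_of_mem _ hi
  rw [Finset.card_eq_sum_card_fiberwise (f := fun i => s(i, σ i)) (t := matchOf σ) hm]
  rw [Finset.sum_const_nat (m := 2), mul_comm]
  intro e he
  obtain ⟨a, ha, rfl⟩ := Finset.mem_image.mp he
  have hne := Equiv.Perm.mem_support.mp ha
  have : σ.support.filter (fun i => s(i, σ i) = s(a, σ a)) = {a, σ a} := by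
    ext i
    simp only [Finset.mem_filter, Equiv.Perm.mem_support, Finset.mem_insert,
      Finset.mem_singleton, Sym2.eq_iff]
    constructor
    · rintro ⟨_, (⟨h1, _⟩ | ⟨h1, _⟩)⟩
      · exact Or.inl h1
      · exact Or.inr h1
    · rintro (rfl | rfl)
      · exact ⟨hne, Or.inl ⟨rfl, rfl⟩⟩
      · rw [hh]; exact ⟨hne.symm, Or.inr ⟨rfl, rfl⟩⟩
  rw [this, Finset.card_pair hne.symm]

open Classical in
theorem mcount_eq [Fintype V] [DecidableEq V] (H : SimpleGraph V) (j : ℕ) :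
    mcount H j = (Finset.univ.filter (fun σ : Equiv.Perm V =>
      (σ * σ = 1 ∧ Compat H σ) ∧ σ.support.card / 2 = j)).card := by
  rw [mcount, ← Set.ncard_coe_finset, ← Set.InjOn.ncard_image (f := matchOf)]
  · congr 1
    ext M
    simp only [Set.mem_ofPred_eq, Set.mem_image, Finset.coe_filter, Finset.mem_univ, true_and]
    constructor
    · rintro ⟨hE, hcard, hdis⟩
      have huniq : ∀ a b b' : V, s(a, b) ∈ M → s(a, b') ∈ M → b = b' := by
        intro a b b' h1 h2
        by_contra hne
        refine hdis _ h1 _ h2 ?_ a ⟨by simp, by simp⟩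
        intro e
        rcases Sym2.eq_iff.mp e with ⟨_, h⟩ | ⟨h, h'⟩
        · exact hne h
        · exact hne (h'.trans h)
      let f : V → V := fun a => if h : ∃ b, s(a, b) ∈ M then h.choose else a
      have hf1 : ∀ a b, s(a, b) ∈ M → f a = b := by
        intro a b hab
        have hex : ∃ b, s(a, b) ∈ M := ⟨b, hab⟩
        have : f a = hex.choose := dif_pos hex
        rw [this]
        exact huniq a _ _ hex.choose_spec hab
      have hf2 : ∀ a, (¬ ∃ b, s(a, b) ∈ M) → f a = a := fun a h => dif_neg h
      have hf3 : ∀ a, f a ≠ a → s(a, f a) ∈ M := by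
        intro a ha
        by_cases hex : ∃ b, s(a, b) ∈ M
        · obtain ⟨b, hb⟩ := hex
          rw [hf1 a b hb]; exact hb
        · exact absurd (hf2 a hex) ha
      have hinv : Function.Involutive f := by
        intro a
        by_cases ha : f a = a
        · rw [ha, ha]
        · exact hf1 _ _ (by rw [Sym2.eq_swap]; exact hf3 a ha)
      have hσ : hinv.toPerm f * hinv.toPerm f = 1 := by
        ext a; exact hinv a
      have hM : matchOf (hinv.toPerm f) = M := by
        ext e
        induction e with
        | h a b =>
          rw [mem_matchOf hσ]
          constructor
          · rintro ⟨h1, h2⟩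
            have h1' : f a = b := h1
            rw [← h1']
            exact hf3 a (by rw [h1']; exact h2.symm)
          · intro h
            exact ⟨hf1 a b h, H.ne_of_adj (hE _ h)⟩
      refine ⟨hinv.toPerm f, ⟨⟨hσ, ?_⟩, ?_⟩, hM⟩
      · intro i hi
        exact SimpleGraph.Adj.symm (hE _ (hf3 i hi))
      · rw [card_matchOf hσ, hM, hcard]; omega
    · rintro ⟨σ, ⟨⟨hσ, hc⟩, hj⟩, rfl⟩
      refine ⟨?_, ?_, ?_⟩
      · intro e
        induction e with
        | h a b =>
          intro he
          rw [mem_matchOf hσ] at he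
          obtain ⟨rfl, h2⟩ := he
          exact (hc a h2.symm).symm
      · have := card_matchOf hσ
        omega
      · intro e he g hg hne v hv
        obtain ⟨⟨b, rfl⟩, ⟨b', rfl⟩⟩ := hv
        rw [mem_matchOf hσ] at he hg
        exact hne (by rw [← he.1, ← hg.1])
  · intro σ hσ τ hτ he
    simp only [Finset.coe_filter, Finset.mem_univ, true_and, Set.mem_ofPred_eq] at hσ hτ
    ext a
    by_cases h1 : σ a = a
    · by_contra h2
      have h3 : τ a ≠ a := fun h => h2 (by rw [h1, h])
      have := (mem_matchOf hτ.1.1 a (τ a)).mpr ⟨rfl, h3.symm⟩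
      rw [← he, mem_matchOf hσ.1.1] at this
      exact h2 this.1
    · have := (mem_matchOf hσ.1.1 a (σ a)).mpr ⟨rfl, fun h => h1 h.symm⟩
      rw [he, mem_matchOf hτ.1.1] at this
      exact this.1.symm

open Classical in
theorem matchPoly_eq [Fintype V] [DecidableEq V] (H : SimpleGraph V) (x : ℂ) :
    matchPolyFun H x = ∑ σ ∈ Finset.univ.filter (fun σ : Equiv.Perm V => σ * σ = 1 ∧ Compat H σ),
      ((Equiv.Perm.sign σ : ℤ) : ℂ) * x ^ (Fintype.card V - σ.support.card) := by
  rw [← Finset.sum_fiberwise_of_maps_to (g := fun σ : Equiv.Perm V => σ.support.card / 2)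
    (t := Finset.range (Fintype.card V / 2 + 1))]
  · rw [matchPolyFun]
    refine Finset.sum_congr rfl fun j _ => ?_
    rw [mcount_eq, Finset.filter_filter]
    rw [Finset.sum_congr rfl (g := fun _ => (-1 : ℂ) ^ j * x ^ (Fintype.card V - 2 * j))]
    · rw [Finset.sum_const, nsmul_eq_mul]
      ring
    · intro σ hσ
      simp only [Finset.mem_filter, Finset.mem_univ, true_and] at hσ
      obtain ⟨⟨h1, _⟩, h2⟩ := hσ
      rw [invol_sign h1, h2]
      have := invol_even h1
      have h3 : σ.support.card = 2 * j := by omega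
      rw [h3]
      push_cast
      rfl
  · intro σ _
    have := Finset.card_le_univ σ.support
    rw [Finset.mem_range]
    omega

/-- The Leibniz term of `σ`. -/
noncomputable def wt [Fintype V] [DecidableEq V] (G : SimpleGraph V) [DecidableRel G.Adj] (x : ℂ)
    (σ : Equiv.Perm V) : ℂ :=
  ((Equiv.Perm.sign σ : ℤ) : ℂ) * ∏ i, (x • (1 : Matrix V V ℂ) - G.adjMatrix ℂ) (σ i) i

theorem wt_zero [Fintype V] [DecidableEq V] (G : SimpleGraph V) [DecidableRel G.Adj] (x : ℂ)
    (σ : Equiv.Perm V) (h : ¬ Compat G σ) : wt G x σ = 0 := by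
  unfold Compat at h
  push Not at h
  obtain ⟨i, h1, h2⟩ := h
  rw [wt, Finset.prod_eq_zero (Finset.mem_univ i), mul_zero]
  simp [Matrix.one_apply_ne h1, h2]

theorem wt_invol [Fintype V] [DecidableEq V] (G : SimpleGraph V) [DecidableRel G.Adj] (x : ℂ)
    (σ : Equiv.Perm V) (h : Compat G σ) (h2 : σ * σ = 1) :
    wt G x σ = ((Equiv.Perm.sign σ : ℤ) : ℂ) * x ^ (Fintype.card V - σ.support.card) := by
  rw [wt, prod_entries G x σ h _ (Finset.subset_univ _), Finset.card_univ,
    Even.neg_one_pow (even_iff_two_dvd.mpr (invol_even h2)), one_mul]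

theorem wt_mul [Fintype V] [DecidableEq V] {G : SimpleGraph V} [DecidableRel G.Adj] (x : ℂ)
    {ρ : Equiv.Perm V} (h : CycData G ρ) {τ : Equiv.Perm V} (hτ : FixC G ρ.support τ) :
    wt G x (ρ * τ) = - (((Equiv.Perm.sign τ : ℤ) : ℂ) *
      x ^ ((ρ.supportᶜ).card - τ.support.card)) := by
  obtain ⟨h1, h2, h3⟩ := hτ
  have hs : Equiv.Perm.sign ρ = 1 := by
    rw [h.cyc.sign, h.odd.neg_one_pow, neg_neg]
  have hsub : τ.support ⊆ ρ.supportᶜ := by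
    intro i hi
    rw [Finset.mem_compl]
    exact fun hc => Equiv.Perm.mem_support.mp hi (h3 i hc)
  rw [wt, ← Finset.prod_mul_prod_compl ρ.support, Equiv.Perm.sign_mul, hs, one_mul]
  have e1 : ∏ i ∈ ρ.support, (x • (1 : Matrix V V ℂ) - G.adjMatrix ℂ) ((ρ * τ) i) i = -1 := by
    rw [Finset.prod_congr rfl (g := fun _ => (-1 : ℂ)), Finset.prod_const, h.odd.neg_one_pow]
    intro i hi
    rw [mul_apply_mem h3 hi]
    simp [Matrix.one_apply_ne (Equiv.Perm.mem_support.mp hi), h.adj i hi]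
  have e2 : ∏ i ∈ ρ.supportᶜ, (x • (1 : Matrix V V ℂ) - G.adjMatrix ℂ) ((ρ * τ) i) i =
      x ^ ((ρ.supportᶜ).card - τ.support.card) := by
    rw [Finset.prod_congr rfl
      (g := fun i => (x • (1 : Matrix V V ℂ) - G.adjMatrix ℂ) (τ i) i),
      prod_entries G x τ h2 _ hsub, Even.neg_one_pow (even_iff_two_dvd.mpr (invol_even h1)),
      one_mul]
    intro i hi
    rw [mul_apply_notMem h3 (Finset.mem_compl.mp hi)]
  rw [e1, e2]
  ring

open Classical in
theorem charFun_eq [Fintype V] [DecidableEq V] {G : SimpleGraph V} [DecidableRel G.Adj] (x : ℂ)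
    {ρ : Equiv.Perm V} (h : CycData G ρ) :
    charFun G x = matchPolyFun G x - 2 * ∑ τ ∈ Finset.univ.filter (FixC G ρ.support),
      (((Equiv.Perm.sign τ : ℤ) : ℂ) * x ^ ((ρ.supportᶜ).card - τ.support.card)) := by
  have h0 : charFun G x = ∑ σ, wt G x σ := by
    rw [charFun, Matrix.det_apply']
    rfl
  have hi : Equiv.Perm.support ρ⁻¹ = ρ.support := Equiv.Perm.support_inv ρ
  have hcomp : ∑ σ, wt G x σ = ∑ σ ∈ Finset.univ.filter (Compat G), wt G x σ := by
    symm
    apply Finset.sum_subset (Finset.subset_univ _)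
    intro σ _ hσ
    apply wt_zero
    simpa using hσ
  rw [h0, hcomp, ← Finset.sum_filter_add_sum_filter_not _ (fun σ => σ * σ = 1),
    Finset.filter_filter, Finset.filter_filter]
  have hA : ∑ σ ∈ Finset.univ.filter (fun σ => Compat G σ ∧ σ * σ = 1), wt G x σ =
      matchPolyFun G x := by
    rw [matchPoly_eq]
    refine Finset.sum_congr ?_ ?_
    · ext σ; simp [and_comm]
    · intro σ hσ
      simp only [Finset.mem_filter, Finset.mem_univ, true_and] at hσ
      exact wt_invol G x σ hσ.2 hσ.1
  have hset : Finset.univ.filter (fun σ => Compat G σ ∧ ¬ σ * σ = 1) =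
      (Finset.univ.filter (FixC G ρ.support)).image (fun τ => ρ * τ) ∪
      (Finset.univ.filter (FixC G ρ.support)).image (fun τ => ρ⁻¹ * τ) := by
    ext σ
    simp only [Finset.mem_filter, Finset.mem_univ, true_and, Finset.mem_union, Finset.mem_image]
    constructor
    · rintro ⟨h1, h2⟩
      rcases noninvol_cases h h1 h2 with h3 | h3
      · left
        exact ⟨ρ⁻¹ * σ, fixC_of h h1 h3, by group⟩
      · right
        refine ⟨ρ * σ, ?_, by group⟩
        have := fixC_of h.inv h1 (by rw [hi]; exact h3)
        rwa [hi, inv_inv] at this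
    · rintro (⟨τ, h1, rfl⟩ | ⟨τ, h1, rfl⟩)
      · exact of_fixC h h1
      · exact of_fixC h.inv (by rw [hi]; exact h1)
  have hdisj : Disjoint ((Finset.univ.filter (FixC G ρ.support)).image (fun τ => ρ * τ))
      ((Finset.univ.filter (FixC G ρ.support)).image (fun τ => ρ⁻¹ * τ)) := by
    rw [Finset.disjoint_left]
    intro σ h1 h2
    simp only [Finset.mem_filter, Finset.mem_univ, true_and, Finset.mem_image] at h1 h2
    obtain ⟨τ, h3, rfl⟩ := h1
    obtain ⟨τ', h4, h5⟩ := h2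
    obtain ⟨a, ha⟩ := h.cyc.nonempty_support
    have h6 := congrArg (fun f : Equiv.Perm V => f a) h5
    simp only [Equiv.Perm.mul_apply] at h6
    rw [h3.2.2 a ha, h4.2.2 a ha] at h6
    have h7 := congrArg ρ h6
    rw [perm_apply_inv] at h7
    exact h.sq_ne ha h7.symm
  have hB : ∑ σ ∈ Finset.univ.filter (fun σ => Compat G σ ∧ ¬ σ * σ = 1), wt G x σ =
      - (2 * ∑ τ ∈ Finset.univ.filter (FixC G ρ.support),
      (((Equiv.Perm.sign τ : ℤ) : ℂ) * x ^ ((ρ.supportᶜ).card - τ.support.card))) := by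
    rw [hset, Finset.sum_union hdisj, Finset.sum_image (fun a _ b _ e => mul_left_cancel e),
      Finset.sum_image (fun a _ b _ e => mul_left_cancel e)]
    rw [Finset.sum_congr rfl (g := fun τ => - (((Equiv.Perm.sign τ : ℤ) : ℂ) *
      x ^ ((ρ.supportᶜ).card - τ.support.card)))]
    · rw [two_mul, neg_add, ← Finset.sum_neg_distrib]
      congr 1
      refine Finset.sum_congr rfl fun τ hτ => ?_
      simp only [Finset.mem_filter, Finset.mem_univ, true_and] at hτ
      have := wt_mul x h.inv (τ := τ) (by rw [hi]; exact hτ)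
      rwa [hi] at this
    · intro τ hτ
      simp only [Finset.mem_filter, Finset.mem_univ, true_and] at hτ
      exact wt_mul x h hτ
  rw [hA, hB]
  ring

open Classical in
theorem fixSum_eq [Fintype V] [DecidableEq V] (G : SimpleGraph V) (x : ℂ) (S : Finset V)
    (s : Set V) [Fintype s] (hs : ∀ a, a ∈ s ↔ a ∉ S) :
    ∑ τ ∈ Finset.univ.filter (FixC G S),
      (((Equiv.Perm.sign τ : ℤ) : ℂ) * x ^ ((Sᶜ).card - τ.support.card)) =
    matchPolyFun (G.induce s) x := by
  rw [matchPoly_eq]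
  symm
  have hcard : Fintype.card s = (Sᶜ).card := by
    exact Fintype.card_of_finset' Sᶜ (fun a => by rw [Finset.mem_compl, hs])
  have hval : ∀ (π : Equiv.Perm s) (a : s), Equiv.Perm.ofSubtype π (a : V) = (π a : V) :=
    fun π a => Equiv.Perm.ofSubtype_apply_coe π a
  have hnot : ∀ (π : Equiv.Perm s) (a : V), a ∉ s → Equiv.Perm.ofSubtype π a = a :=
    fun π a ha => Equiv.Perm.ofSubtype_apply_of_not_mem π ha
  refine Finset.sum_bij (fun π _ => Equiv.Perm.ofSubtype π) ?_ ?_ ?_ ?_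
  · intro π hπ
    simp only [Finset.mem_filter, Finset.mem_univ, true_and] at hπ ⊢
    refine ⟨by rw [← map_mul, hπ.1, map_one], ?_, ?_⟩
    · intro i hi
      by_cases his : i ∈ s
      · have h1 := hval π ⟨i, his⟩
        simp only at h1
        rw [h1] at hi ⊢
        exact hπ.2 ⟨i, his⟩ (fun e => hi (by rw [e]))
      · exact absurd (hnot π i his) hi
    · intro a ha
      exact hnot π a (fun hc => (hs a).mp hc ha)
  · intro π _ π' _ e
    exact Equiv.Perm.ofSubtype_injective e
  · intro τ hτ
    simp only [Finset.mem_filter, Finset.mem_univ, true_and] at hτ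
    obtain ⟨h1, h2, h3⟩ := hτ
    have hmem : ∀ a, τ a ∈ s ↔ a ∈ s := by
      intro a
      rw [hs, hs]
      refine ⟨fun h hc => h (by rw [h3 a hc]; exact hc), fun h => fixC_notMem h3 h⟩
    have hof : Equiv.Perm.ofSubtype (τ.subtypePerm hmem) = τ := by
      apply Equiv.Perm.ofSubtype_subtypePerm
      intro a ha
      rw [hs]
      exact fun hc => ha (h3 a hc)
    refine ⟨τ.subtypePerm hmem, ?_, hof⟩
    simp only [Finset.mem_filter, Finset.mem_univ, true_and]
    constructor
    · apply Equiv.Perm.ofSubtype_injective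
      rw [map_mul, hof, h1, map_one]
    · intro i hi
      exact h2 i (fun e => hi (Subtype.ext e))
  · intro π _
    rw [hcard, Equiv.Perm.support_ofSubtype, Finset.card_map]
    rw [Equiv.Perm.sign_ofSubtype π]
    congr!

theorem cycData_of_cycle [Fintype V] [DecidableEq V] (G : SimpleGraph V) [DecidableRel G.Adj]
    (hconn : G.Connected) (hedge : G.edgeFinset.card = Fintype.card V)
    (v : V) (c : G.Walk v v) (hc : c.IsCycle) (hodd : Odd c.length) :
    ∃ ρ : Equiv.Perm V, CycData G ρ ∧ ρ.support = c.support.toFinset ∧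
      ρ.support.card = c.length := by
  have h3 := hc.three_le_length
  have hlen : c.support.tail.length = c.length := by simp
  have hnd : c.support.tail.Nodup := hc.support_nodup
  have hsupp : (c.support.tail.formPerm).support = c.support.tail.toFinset := by
    apply List.support_formPerm_of_nodup _ hnd
    intro x e
    rw [e] at hlen
    simp at hlen
    omega
  have hmem : c.support.tail.toFinset = c.support.toFinset := by
    ext a
    rw [List.mem_toFinset, List.mem_toFinset, ← c.cons_tail_support]
    simp only [List.tail_cons, List.mem_cons]
    refine ⟨Or.inr, ?_⟩
    rintro (rfl | h)
    · exact SimpleGraph.Walk.end_mem_tail_support hc.not_nil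
    · exact h
  have hcard : (c.support.tail.formPerm).support.card = c.length := by
    rw [hsupp, List.toFinset_card_of_nodup hnd, hlen]
  have hE : ∀ a ∈ (c.support.tail.formPerm).support, s(c.support.tail.formPerm a, a) ∈ c.edges := by
    intro a ha
    rw [hsupp, List.mem_toFinset] at ha
    obtain ⟨m, hm, rfl⟩ := List.getElem_of_mem ha
    rw [List.formPerm_apply_getElem _ hnd, Sym2.eq_swap]
    have hget : ∀ m (hm : m < c.support.tail.length), c.support.tail[m] = c.getVert (m + 1) := by
      intro m hm
      rw [List.getElem_tail, SimpleGraph.Walk.support_getElem_eq_getVert]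
    have hge : ∀ m < c.length, s(c.getVert m, c.getVert (m + 1)) ∈ c.edges := by
      intro m hm
      rw [SimpleGraph.Walk.edges_eq_zipWith_support, List.mem_iff_getElem]
      refine ⟨m, by simp; omega, ?_⟩
      rw [List.getElem_zipWith, hget, SimpleGraph.Walk.support_getElem_eq_getVert]
    rw [hget, hget, hlen]
    rw [hlen] at hm
    by_cases hlast : m + 1 = c.length
    · rw [hlast, Nat.mod_self, SimpleGraph.Walk.getVert_length]
      have := hge 0 (by omega)
      rwa [SimpleGraph.Walk.getVert_zero] at this
    · rw [Nat.mod_eq_of_lt (by omega)]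
      exact hge (m + 1) (by omega)
  refine ⟨c.support.tail.formPerm, ⟨?_, ?_, ?_, ?_, ?_⟩, hsupp.trans hmem, hcard⟩
  · exact List.isCycle_formPerm hnd (by omega)
  · omega
  · rwa [hcard]
  · intro a ha
    exact c.adj_of_mem_edges (hE a ha)
  · intro a ha
    set b := c.support.tail.formPerm a
    have hnb : ¬ G.IsBridge s(b, a) := fun hb => hb.notMem_edges_of_isCycle hc (hE a ha)
    have hcon := hconn.connected_delete_edge_of_not_isBridge hnb
    refine (SimpleGraph.isTree_iff_connected_and_card.mpr ⟨hcon, ?_⟩).isAcyclic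
    have hin : s(b, a) ∈ G.edgeSet := c.edges_subset_edgeSet (hE a ha)
    have h1 : (G.deleteEdges {s(b, a)}).edgeSet = G.edgeSet \ {s(b, a)} :=
      SimpleGraph.edgeSet_deleteEdges _
    rw [Nat.card_coe_set_eq, h1, Set.ncard_sdiff_singleton_add_one hin, Nat.card_eq_fintype_card,
      ← hedge, ← Set.ncard_coe_finset, SimpleGraph.coe_edgeFinset]

theorem zpow_matchPoly [Fintype V] (H : SimpleGraph V) (t : ℝ) :
    Complex.I ^ (-(Fintype.card V : ℤ)) * matchPolyFun H (Complex.I * t) =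
      ((∑ j ∈ Finset.range (Fintype.card V / 2 + 1),
        (mcount H j : ℝ) * t ^ (Fintype.card V - 2 * j) : ℝ) : ℂ) := by
  rw [matchPolyFun, Finset.mul_sum]
  push_cast
  refine Finset.sum_congr rfl fun j hj => ?_
  rw [Finset.mem_range] at hj
  have hI : Complex.I ^ (Fintype.card V) = (-1) ^ j * Complex.I ^ (Fintype.card V - 2 * j) := by
    rw [← Complex.I_sq, ← pow_mul, ← pow_add]
    congr 1
    omega
  have hne : Complex.I ^ (Fintype.card V) ≠ 0 := pow_ne_zero _ Complex.I_ne_zero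
  rw [zpow_neg, zpow_natCast, mul_pow]
  have : (-1 : ℂ) ^ j * (mcount H j : ℂ) *
      (Complex.I ^ (Fintype.card V - 2 * j) * (t : ℂ) ^ (Fintype.card V - 2 * j)) =
      Complex.I ^ (Fintype.card V) * ((mcount H j : ℂ) * (t : ℂ) ^ (Fintype.card V - 2 * j)) := by
    rw [hI]; ring
  rw [this, inv_mul_cancel_left₀ hne]

theorem mcount_zero_pos [Finite V] (H : SimpleGraph V) : 0 < mcount H 0 := by
  rw [mcount, Set.ncard_pos (Set.toFinite _)]
  exact ⟨∅, by simp⟩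

/-- For a unicyclic graph `G` of order `n` with odd cycle of length `k`, writing
`M_G(t) = i^(−n) μ_G(it)` and `M_F(t) = i^(−(n−k)) μ_F(it)` with `F = G − V(C)`:
`i^(−n) φ_G(it) = M_G(t) + 2i M_F(t)` if `k ≡ 1 (mod 4)`, and
`i^(−n) φ_G(it) = M_G(t) − 2i M_F(t)` if `k ≡ 3 (mod 4)`; in both cases
`i^(−n) φ_G(it)` has positive real part for every `t > 0`. -/
theorem charFun_decomposition [Fintype V] [DecidableEq V] (G : SimpleGraph V)
    [DecidableRel G.Adj]
    (hconn : G.Connected) (hedge : G.edgeFinset.card = Fintype.card V)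
    (v : V) (c : G.Walk v v) (hc : c.IsCycle) (hodd : Odd c.length) :
    (c.length % 4 = 1 → ∀ t : ℝ, 0 < t →
      Complex.I ^ (-(Fintype.card V : ℤ)) * charFun G (Complex.I * t) =
        Complex.I ^ (-(Fintype.card V : ℤ)) * matchPolyFun G (Complex.I * t) +
          2 * Complex.I * (Complex.I ^ (-((Fintype.card V : ℤ) - c.length)) *
            matchPolyFun (G.induce ↑(c.support.toFinset)ᶜ) (Complex.I * t))) ∧
    (c.length % 4 = 3 → ∀ t : ℝ, 0 < t →
      Complex.I ^ (-(Fintype.card V : ℤ)) * charFun G (Complex.I * t) =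
        Complex.I ^ (-(Fintype.card V : ℤ)) * matchPolyFun G (Complex.I * t) -
          2 * Complex.I * (Complex.I ^ (-((Fintype.card V : ℤ) - c.length)) *
            matchPolyFun (G.induce ↑(c.support.toFinset)ᶜ) (Complex.I * t))) ∧
    (∀ t : ℝ, 0 < t →
      0 < (Complex.I ^ (-(Fintype.card V : ℤ)) * charFun G (Complex.I * t)).re) := by
  obtain ⟨ρ, hρ, hsupp, hcard⟩ := cycData_of_cycle G hconn hedge v c hc hodd
  have hcompl : (ρ.supportᶜ).card = Fintype.card V - c.length := by
    rw [Finset.card_compl, hcard]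
  have hle : c.length ≤ Fintype.card V := by
    rw [← hcard]; exact Finset.card_le_univ _
  have hphi : ∀ x : ℂ, charFun G x = matchPolyFun G x -
      2 * matchPolyFun (G.induce ↑(c.support.toFinset)ᶜ) x := by
    intro x
    rw [charFun_eq x hρ]
    congr 2
    exact fixSum_eq G x ρ.support _ (fun a => by rw [hsupp]; simp)
  have hI : Complex.I ^ (-(Fintype.card V : ℤ)) =
      Complex.I ^ (-(c.length : ℤ)) * Complex.I ^ (-((Fintype.card V : ℤ) - c.length)) := by
    rw [← zpow_add₀ Complex.I_ne_zero]
    congr 1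
    ring
  have hmain : ∀ t : ℝ, Complex.I ^ (-(Fintype.card V : ℤ)) * charFun G (Complex.I * t) =
      Complex.I ^ (-(Fintype.card V : ℤ)) * matchPolyFun G (Complex.I * t) -
        2 * Complex.I ^ (-(c.length : ℤ)) * (Complex.I ^ (-((Fintype.card V : ℤ) - c.length)) *
          matchPolyFun (G.induce ↑(c.support.toFinset)ᶜ) (Complex.I * t)) := by
    intro t
    rw [hphi, mul_sub]
    congr 1
    rw [hI]
    ring
  have hk1 : c.length % 4 = 1 → Complex.I ^ (-(c.length : ℤ)) = -Complex.I := by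
    intro h
    rw [zpow_neg, zpow_natCast, Complex.I_pow_eq_pow_mod, h, pow_one, Complex.inv_I]
  have hk3 : c.length % 4 = 3 → Complex.I ^ (-(c.length : ℤ)) = Complex.I := by
    intro h
    rw [zpow_neg, zpow_natCast, Complex.I_pow_eq_pow_mod, h, Complex.I_pow_three, inv_neg,
      Complex.inv_I, neg_neg]
  have hP1 : c.length % 4 = 1 → ∀ t : ℝ, 0 < t →
      Complex.I ^ (-(Fintype.card V : ℤ)) * charFun G (Complex.I * t) =
        Complex.I ^ (-(Fintype.card V : ℤ)) * matchPolyFun G (Complex.I * t) +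
          2 * Complex.I * (Complex.I ^ (-((Fintype.card V : ℤ) - c.length)) *
            matchPolyFun (G.induce ↑(c.support.toFinset)ᶜ) (Complex.I * t)) := by
    intro h t _
    rw [hmain, hk1 h]
    ring
  have hP3 : c.length % 4 = 3 → ∀ t : ℝ, 0 < t →
      Complex.I ^ (-(Fintype.card V : ℤ)) * charFun G (Complex.I * t) =
        Complex.I ^ (-(Fintype.card V : ℤ)) * matchPolyFun G (Complex.I * t) -
          2 * Complex.I * (Complex.I ^ (-((Fintype.card V : ℤ) - c.length)) *
            matchPolyFun (G.induce ↑(c.support.toFinset)ᶜ) (Complex.I * t)) := by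
    intro h t _
    rw [hmain, hk3 h]
  refine ⟨hP1, hP3, ?_⟩
  intro t ht
  have hpos : 0 < ∑ j ∈ Finset.range (Fintype.card V / 2 + 1),
      (mcount G j : ℝ) * t ^ (Fintype.card V - 2 * j) := by
    apply Finset.sum_pos'
    · intro j _; positivity
    · refine ⟨0, by simp, ?_⟩
      have := mcount_zero_pos G
      positivity
  have hF : ∃ r : ℝ, Complex.I ^ (-((Fintype.card V : ℤ) - c.length)) *
      matchPolyFun (G.induce ↑(c.support.toFinset)ᶜ) (Complex.I * t) = (r : ℂ) := by
    have h1 := zpow_matchPoly (G.induce ↑(c.support.toFinset)ᶜ) t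
    refine ⟨_, Eq.trans ?_ h1⟩
    congr 2
    rw [Fintype.card_of_finset' (c.support.toFinset)ᶜ (fun a => by simp), ← hsupp, hcompl]
    push_cast [hle]
    ring
  obtain ⟨r, hr⟩ := hF
  have h4 : c.length % 4 = 1 ∨ c.length % 4 = 3 := by
    have := Nat.odd_iff.mp hodd
    omega
  rcases h4 with h4 | h4
  · rw [hP1 h4 t ht, hr, zpow_matchPoly]
    generalize (∑ j ∈ Finset.range (Fintype.card V / 2 + 1),
      (mcount G j : ℝ) * t ^ (Fintype.card V - 2 * j)) = q at hpos
    simpa using hpos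
  · rw [hP3 h4 t ht, hr, zpow_matchPoly]
    generalize (∑ j ∈ Finset.range (Fintype.card V / 2 + 1),
      (mcount G j : ℝ) * t ^ (Fintype.card V - 2 * j)) = q at hpos
    simpa using hpos
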